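/- arXiv:1505.06834 — 9 statements merged into one kernel-verified Lean document; each statement's English description precedes it below -/
import Mathlib

section
/- Let γ₁, γ₂ : [0,∞) → ℝ be C¹ functions with γ₁(s) > 0 for every s ≥ 0 and satisfying the Euclidean arc-length condition γ₁'(s)² + γ₂'(s)² = 1 for all s ≥ 0. Then ∫₀^∞ 1/γ₁(s) ds = +∞ (the integral diverges). Consequently every complete end of revolution in ℝ³ is a parabolic end. -/
open MeasureTheory Set

/-- Euclidean case: the profile curve of a complete end of revolution in ℝ³,
parametrized by Euclidean arc length, has `∫₀^∞ 1/γ₁ = ∞`, hence the end is parabolic. -/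
theorem end_of_revolution_R3_parabolic
    (γ₁ γ₂ γ₁' γ₂' : ℝ → ℝ)
    (hpos : ∀ s ∈ Ici (0:ℝ), 0 < γ₁ s)
    (hd1 : ∀ s ∈ Ici (0:ℝ), HasDerivAt γ₁ (γ₁' s) s)
    (hd2 : ∀ s ∈ Ici (0:ℝ), HasDerivAt γ₂ (γ₂' s) s)
    (hc1 : ContinuousOn γ₁' (Ici (0:ℝ)))
    (hc2 : ContinuousOn γ₂' (Ici (0:ℝ)))
    (harc : ∀ s ∈ Ici (0:ℝ), (γ₁' s) ^ 2 + (γ₂' s) ^ 2 = 1) :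
    ∫⁻ s in Ioi (0:ℝ), ENNReal.ofReal (1 / γ₁ s) = ⊤ := by
  have hb : ∀ s ∈ Ici (0:ℝ), γ₁ s ≤ γ₁ 0 + s := by
    intro s hs
    have h := (convex_Ici (0:ℝ)).norm_image_sub_le_of_norm_hasDerivWithin_le (C := 1)
      (fun x hx => (hd1 x hx).hasDerivWithinAt)
      (fun x hx => by
        rw [Real.norm_eq_abs, abs_le_one_iff_mul_self_le_one]
        nlinarith [harc x hx, sq_nonneg (γ₂' x)])
      (mem_Ici.2 le_rfl) hs
    have hs0 : (0:ℝ) ≤ s := hs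
    rw [Real.norm_eq_abs, Real.norm_eq_abs, sub_zero, abs_of_nonneg hs0] at h
    linarith [le_abs_self (γ₁ s - γ₁ 0)]
  have hc : 0 < γ₁ 0 := hpos 0 (mem_Ici.2 le_rfl)
  by_contra hne
  have hlt : ∫⁻ s in Ioi (γ₁ 0), ENNReal.ofReal (2⁻¹ * s⁻¹) < ⊤ := by
    refine lt_of_le_of_lt ?_ (lt_top_iff_ne_top.2 hne)
    refine le_trans (setLIntegral_mono' measurableSet_Ioi ?_)
      (lintegral_mono_set (Ioi_subset_Ioi hc.le))
    intro s hs
    have hs' : γ₁ 0 < s := hs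
    have hs0 : (0:ℝ) ≤ s := (hc.trans hs').le
    apply ENNReal.ofReal_le_ofReal
    rw [← mul_inv, ← one_div]
    exact one_div_le_one_div_of_le (hpos s hs0) (by linarith [hb s hs0])
  have hint : IntegrableOn (fun s : ℝ => 2⁻¹ * s⁻¹) (Ioi (γ₁ 0)) := by
    refine ⟨(by fun_prop : Measurable fun s : ℝ => 2⁻¹ * s⁻¹).aestronglyMeasurable, ?_⟩
    rw [hasFiniteIntegral_iff_ofReal]
    · exact hlt
    · filter_upwards [ae_restrict_mem measurableSet_Ioi] with s hs
      have hs' : 0 < s := hc.trans hs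
      show 0 ≤ 2⁻¹ * s⁻¹
      positivity
  refine not_integrableOn_Ioi_inv (a := γ₁ 0) ?_
  have h2 := hint.const_mul 2
  simpa [IntegrableOn] using h2
end

section
/- Let γ₁, γ₂ : [0,∞) → ℝ be C¹ functions with γ₁(s) > 0 for every s ≥ 0 and satisfying the spherical arc-length condition 4(γ₁'(s)² + γ₂'(s)²) = (1 + γ₁(s)² + γ₂(s)²)² for all s ≥ 0. Then ∫₀^∞ (1 + γ₁(s)² + γ₂(s)²)/(2 γ₁(s)) ds = +∞ (the integral diverges). Consequently every complete end of revolution in S³ is a parabolic end. -/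
open MeasureTheory Set

/-- Spherical case: the profile curve of a complete end of revolution in S³
(in the conformal model), parametrized by arc length, has
`∫₀^∞ (1+γ₁²+γ₂²)/(2γ₁) = ∞`, hence the end is parabolic. -/
theorem end_of_revolution_S3_parabolic
    (γ₁ γ₂ γ₁' γ₂' : ℝ → ℝ)
    (hpos : ∀ s ∈ Ici (0:ℝ), 0 < γ₁ s)
    (hd1 : ∀ s ∈ Ici (0:ℝ), HasDerivAt γ₁ (γ₁' s) s)
    (hd2 : ∀ s ∈ Ici (0:ℝ), HasDerivAt γ₂ (γ₂' s) s)
    (hc1 : ContinuousOn γ₁' (Ici (0:ℝ)))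
    (hc2 : ContinuousOn γ₂' (Ici (0:ℝ)))
    (harc : ∀ s ∈ Ici (0:ℝ),
      4 * ((γ₁' s) ^ 2 + (γ₂' s) ^ 2) = (1 + (γ₁ s) ^ 2 + (γ₂ s) ^ 2) ^ 2) :
    ∫⁻ s in Ioi (0:ℝ),
      ENNReal.ofReal ((1 + (γ₁ s) ^ 2 + (γ₂ s) ^ 2) / (2 * γ₁ s)) = ⊤ := by
  rw [eq_top_iff]
  calc (⊤ : ENNReal) = ∫⁻ _ in Ioi (0:ℝ), (1 : ENNReal) := by
        rw [setLIntegral_one, Real.volume_Ioi]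
    _ ≤ _ := by
        refine setLIntegral_mono' measurableSet_Ioi ?_
        intro s hs
        have h0 : 0 < γ₁ s := hpos s (Ioi_subset_Ici_self hs)
        rw [ENNReal.one_le_ofReal, le_div_iff₀ (by positivity)]
        nlinarith [sq_nonneg (γ₁ s - 1), sq_nonneg (γ₂ s)]
end

section
/- Let γ₁, γ₂ : [0,∞) → ℝ be C¹ functions with γ₁(s) > 0 and γ₂(s) > 0 for all s ≥ 0, satisfying the hyperbolic arc-length condition (γ₁'(s)² + γ₂'(s)²)/γ₂(s)² = 1 for all s ≥ 0. If there is z > 0 such that γ₂(s) ≥ z for all s ≥ 0 (the end lies on or above the horosphere {x₃ = z}), then ∫₀^∞ γ₂(s)/γ₁(s) ds = +∞. Consequently every complete end of revolution in ℍ³ contained on the horosphere {x₃ = z} (or inside the horoball {x₃ ≥ z}) is parabolic. -/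
open MeasureTheory Set

/-- Hyperbolic case: an end of revolution in ℍ³ lying on or above the horosphere
`{x₃ = z}` (`γ₂ ≥ z > 0`) has `∫₀^∞ γ₂/γ₁ = ∞`, hence is parabolic. -/
theorem end_of_revolution_H3_on_horosphere_parabolic
    (γ₁ γ₂ γ₁' γ₂' : ℝ → ℝ)
    (hpos1 : ∀ s ∈ Ici (0:ℝ), 0 < γ₁ s)
    (hpos2 : ∀ s ∈ Ici (0:ℝ), 0 < γ₂ s)
    (hd1 : ∀ s ∈ Ici (0:ℝ), HasDerivAt γ₁ (γ₁' s) s)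
    (hd2 : ∀ s ∈ Ici (0:ℝ), HasDerivAt γ₂ (γ₂' s) s)
    (hc1 : ContinuousOn γ₁' (Ici (0:ℝ)))
    (hc2 : ContinuousOn γ₂' (Ici (0:ℝ)))
    (harc : ∀ s ∈ Ici (0:ℝ), ((γ₁' s) ^ 2 + (γ₂' s) ^ 2) / (γ₂ s) ^ 2 = 1)
    (z : ℝ) (hz : 0 < z)
    (hhoro : ∀ s ∈ Ici (0:ℝ), z ≤ γ₂ s) :
    ∫⁻ s in Ioi (0:ℝ), ENNReal.ofReal (γ₂ s / γ₁ s) = ⊤ := by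
  by_contra h
  have hcont1 : ContinuousOn γ₁ (Ici (0:ℝ)) :=
    fun s hs => (hd1 s hs).continuousAt.continuousWithinAt
  have hcont2 : ContinuousOn γ₂ (Ici (0:ℝ)) :=
    fun s hs => (hd2 s hs).continuousAt.continuousWithinAt
  have hcf : ContinuousOn (fun s => γ₂ s / γ₁ s) (Ici (0:ℝ)) :=
    hcont2.div hcont1 (fun s hs => (hpos1 s hs).ne')
  have hfpos : ∀ s ∈ Ici (0:ℝ), 0 ≤ γ₂ s / γ₁ s :=
    fun s hs => (div_pos (hpos2 s hs) (hpos1 s hs)).le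
  have hnn : ∀ᵐ s ∂(volume.restrict (Ioi (0:ℝ))), 0 ≤ γ₂ s / γ₁ s :=
    (ae_restrict_iff' measurableSet_Ioi).2
      (Filter.Eventually.of_forall fun s hs => hfpos s (Ioi_subset_Ici_self hs))
  have hint : IntegrableOn (fun s => γ₂ s / γ₁ s) (Ioi (0:ℝ)) := by
    refine ⟨(hcf.mono Ioi_subset_Ici_self).aestronglyMeasurable measurableSet_Ioi, ?_⟩
    rw [hasFiniteIntegral_iff_ofReal hnn]
    exact lt_top_iff_ne_top.2 h
  set C := ∫ s in Ioi (0:ℝ), γ₂ s / γ₁ s with hC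
  have hder : ∀ s ∈ Ici (0:ℝ), γ₁' s / γ₁ s ≤ γ₂ s / γ₁ s := by
    intro s hs
    have h2 := hpos2 s hs
    have ha := harc s hs
    rw [div_eq_one_iff_eq (by positivity)] at ha
    have : γ₁' s ≤ γ₂ s := abs_le_of_sq_le_sq' (by nlinarith [sq_nonneg (γ₂' s)]) h2.le |>.2
    exact div_le_div_of_nonneg_right this (hpos1 s hs).le
  have hlog : ∀ t ∈ Ici (0:ℝ), Real.log (γ₁ t) - Real.log (γ₁ 0) ≤ C := by
    intro t ht
    have ht' : (0:ℝ) ≤ t := ht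
    have h1 : Real.log (γ₁ t) - Real.log (γ₁ 0) ≤ ∫ s in (0:ℝ)..t, γ₂ s / γ₁ s := by
      refine intervalIntegral.sub_le_integral_of_hasDeriv_right_of_le ht'
        (g := fun s => Real.log (γ₁ s)) (g' := fun s => γ₁' s / γ₁ s) ?_ ?_ ?_ ?_
      · exact (hcont1.mono Icc_subset_Ici_self).log
          (fun s hs => (hpos1 s (Icc_subset_Ici_self hs)).ne')
      · intro s hs
        have hs0 : s ∈ Ici (0:ℝ) := hs.1.le
        exact ((hd1 s hs0).log (hpos1 s hs0).ne').hasDerivWithinAt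
      · exact (hcf.mono Icc_subset_Ici_self).integrableOn_Icc
      · intro s hs
        exact hder s hs.1.le
    refine h1.trans ?_
    rw [intervalIntegral.integral_of_le ht']
    exact setIntegral_mono_set hint hnn (Filter.Eventually.of_forall Ioc_subset_Ioi_self)
  set M := γ₁ 0 * Real.exp C with hM
  have h0 : 0 < γ₁ 0 := hpos1 0 self_mem_Ici
  have hMpos : 0 < M := by positivity
  have hbd : ∀ t ∈ Ici (0:ℝ), γ₁ t ≤ M := by
    intro t ht
    rw [← Real.log_le_log_iff (hpos1 t ht) hMpos, hM,
      Real.log_mul h0.ne' (Real.exp_pos _).ne', Real.log_exp]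
    linarith [hlog t ht]
  apply h
  rw [eq_top_iff]
  calc (⊤ : ENNReal) = ∫⁻ _ in Ioi (0:ℝ), ENNReal.ofReal (z / M) := by
        rw [setLIntegral_const, Real.volume_Ioi, ENNReal.mul_top]
        exact (ENNReal.ofReal_pos.2 (div_pos hz hMpos)).ne'
    _ ≤ _ := by
        refine setLIntegral_mono' measurableSet_Ioi fun s hs => ?_
        have hs0 : s ∈ Ici (0:ℝ) := Ioi_subset_Ici_self hs
        exact ENNReal.ofReal_le_ofReal
          (div_le_div₀ (hpos2 s hs0).le (hhoro s hs0) (hpos1 s hs0) (hbd s hs0))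
end

section
/- Let γ₁, γ₂ : [0,∞) → ℝ be C¹ functions with γ₁(s) > 0 and γ₂(s) > 0 for all s ≥ 0, satisfying the hyperbolic arc-length condition (γ₁'(s)² + γ₂'(s)²)/γ₂(s)² = 1 for all s ≥ 0. If ∫₀^∞ γ₂(s)/γ₁(s) ds < +∞ (the end is non-parabolic), then inf_{s ≥ 0} γ₂(s) = 0. Consequently every complete non-parabolic end of revolution in ℍ³ approaches the plane {x₃ = 0}. -/
open MeasureTheory Set

/-- Hyperbolic case: a complete non-parabolic end of revolution in ℍ³
(`∫₀^∞ γ₂/γ₁ < ∞`) approaches the plane `{x₃ = 0}`: `inf_{s ≥ 0} γ₂(s) = 0`. -/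
theorem nonparabolic_end_H3_approaches_boundary
    (γ₁ γ₂ γ₁' γ₂' : ℝ → ℝ)
    (hpos1 : ∀ s ∈ Ici (0:ℝ), 0 < γ₁ s)
    (hpos2 : ∀ s ∈ Ici (0:ℝ), 0 < γ₂ s)
    (hd1 : ∀ s ∈ Ici (0:ℝ), HasDerivAt γ₁ (γ₁' s) s)
    (hd2 : ∀ s ∈ Ici (0:ℝ), HasDerivAt γ₂ (γ₂' s) s)
    (hc1 : ContinuousOn γ₁' (Ici (0:ℝ)))
    (hc2 : ContinuousOn γ₂' (Ici (0:ℝ)))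
    (harc : ∀ s ∈ Ici (0:ℝ), ((γ₁' s) ^ 2 + (γ₂' s) ^ 2) / (γ₂ s) ^ 2 = 1)
    (hfin : ∫⁻ s in Ioi (0:ℝ), ENNReal.ofReal (γ₂ s / γ₁ s) ≠ ⊤) :
    sInf (γ₂ '' Ici (0:ℝ)) = 0 := by
  have harc' : ∀ s ∈ Ici (0:ℝ), γ₁' s ≤ γ₂ s := by
    intro s hs
    have h2 := hpos2 s hs
    have h := harc s hs
    rw [div_eq_one_iff_eq (by positivity)] at h
    exact abs_le_of_sq_le_sq' (by nlinarith [sq_nonneg (γ₂' s)]) h2.le |>.2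
  have hcf : ContinuousOn (fun s => γ₂ s / γ₁ s) (Ici (0:ℝ)) := fun s hs =>
    (((hd2 s hs).continuousAt).div ((hd1 s hs).continuousAt) (hpos1 s hs).ne').continuousWithinAt
  have hnn : ∀ s ∈ Ici (0:ℝ), 0 ≤ γ₂ s / γ₁ s := fun s hs =>
    div_nonneg (hpos2 s hs).le (hpos1 s hs).le
  have hae : 0 ≤ᵐ[volume.restrict (Ioi (0:ℝ))] (fun s => γ₂ s / γ₁ s) := by
    filter_upwards [ae_restrict_mem measurableSet_Ioi] with s hs
    exact hnn s (Ioi_subset_Ici_self hs)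
  have hint : IntegrableOn (fun s => γ₂ s / γ₁ s) (Ioi (0:ℝ)) := by
    refine ⟨(hcf.mono Ioi_subset_Ici_self).aestronglyMeasurable measurableSet_Ioi, ?_⟩
    rw [hasFiniteIntegral_iff_ofReal hae]
    exact lt_top_iff_ne_top.mpr hfin
  set I := ∫ s in Ioi (0:ℝ), γ₂ s / γ₁ s with hI
  have h00 : (0:ℝ) ∈ Ici (0:ℝ) := self_mem_Ici
  have hbd : ∀ T ∈ Ici (0:ℝ), γ₁ T ≤ γ₁ 0 * Real.exp I := by
    intro T hT
    have h1 : Real.log (γ₁ T) - Real.log (γ₁ 0) ≤ ∫ s in (0:ℝ)..T, γ₂ s / γ₁ s := by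
      refine intervalIntegral.sub_le_integral_of_hasDeriv_right_of_le
        (g := fun s => Real.log (γ₁ s)) (g' := fun s => γ₁' s / γ₁ s) hT ?_ ?_ ?_ ?_
      · intro s hs
        exact (((hd1 s hs.1).log (hpos1 s hs.1).ne').continuousAt).continuousWithinAt
      · intro s hs
        exact ((hd1 s hs.1.le).log (hpos1 s hs.1.le).ne').hasDerivWithinAt
      · exact (hcf.mono Icc_subset_Ici_self).integrableOn_Icc
      · intro s hs
        exact div_le_div_of_nonneg_right (harc' s hs.1.le) (hpos1 s hs.1.le).le
    have h2 : ∫ s in (0:ℝ)..T, γ₂ s / γ₁ s ≤ I := by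
      rw [intervalIntegral.integral_of_le hT]
      exact setIntegral_mono_set hint hae (Filter.Eventually.of_forall fun s hs => hs.1)
    have h3 : Real.log (γ₁ T) ≤ Real.log (γ₁ 0) + I := by linarith
    have h4 := Real.exp_le_exp.mpr h3
    rwa [Real.exp_add, Real.exp_log (hpos1 T hT), Real.exp_log (hpos1 0 h00)] at h4
  have hlb : BddBelow (γ₂ '' Ici (0:ℝ)) := ⟨0, by rintro _ ⟨s, hs, rfl⟩; exact (hpos2 s hs).le⟩
  have hge : 0 ≤ sInf (γ₂ '' Ici (0:ℝ)) :=
    Real.sInf_nonneg (by rintro _ ⟨s, hs, rfl⟩; exact (hpos2 s hs).le)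
  by_contra hne
  have hc : 0 < sInf (γ₂ '' Ici (0:ℝ)) := lt_of_le_of_ne hge (Ne.symm hne)
  set c := sInf (γ₂ '' Ici (0:ℝ)) with hcdef
  have hC : 0 < γ₁ 0 * Real.exp I := mul_pos (hpos1 0 h00) (Real.exp_pos _)
  apply hfin
  rw [eq_top_iff]
  calc (⊤ : ENNReal) = ∫⁻ s in Ioi (0:ℝ), ENNReal.ofReal (c / (γ₁ 0 * Real.exp I)) := by
        rw [setLIntegral_const, Real.volume_Ioi, ENNReal.mul_top]
        exact (ENNReal.ofReal_pos.mpr (div_pos hc hC)).ne'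
    _ ≤ _ := by
        refine setLIntegral_mono' measurableSet_Ioi fun s hs => ?_
        have hs' : s ∈ Ici (0:ℝ) := Ioi_subset_Ici_self hs
        exact ENNReal.ofReal_le_ofReal (div_le_div₀ (hpos2 s hs').le
          (csInf_le hlb ⟨s, hs', rfl⟩) (hpos1 s hs') (hbd s hs'))
end

section
/- Let γ₁, γ₂ : [0,∞) → ℝ be C¹ functions with γ₁(s) > 0 and γ₂(s) > 0 for all s ≥ 0, satisfying the hyperbolic arc-length condition (γ₁'(s)² + γ₂'(s)²)/γ₂(s)² = 1 for all s ≥ 0. If ∫₀^∞ γ₂(s)/γ₁(s) ds < +∞ (the end is non-parabolic), then sup_{s ≥ 0} γ₁(s) < +∞; in fact γ₁(s) ≤ γ₁(0)·exp(∫₀^∞ γ₂(t)/γ₁(t) dt) for all s ≥ 0. -/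
open MeasureTheory Set

/-- Hyperbolic case: for a non-parabolic end of revolution in ℍ³
(`∫₀^∞ γ₂/γ₁ < ∞`), the first coordinate of the profile curve is bounded:
`γ₁(s) ≤ γ₁(0)·exp(∫₀^∞ γ₂/γ₁)` for all `s ≥ 0`. -/
theorem nonparabolic_end_H3_bounded_first_coordinate
    (γ₁ γ₂ γ₁' γ₂' : ℝ → ℝ)
    (hpos1 : ∀ s ∈ Ici (0:ℝ), 0 < γ₁ s)
    (hpos2 : ∀ s ∈ Ici (0:ℝ), 0 < γ₂ s)
    (hd1 : ∀ s ∈ Ici (0:ℝ), HasDerivAt γ₁ (γ₁' s) s)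
    (hd2 : ∀ s ∈ Ici (0:ℝ), HasDerivAt γ₂ (γ₂' s) s)
    (hc1 : ContinuousOn γ₁' (Ici (0:ℝ)))
    (hc2 : ContinuousOn γ₂' (Ici (0:ℝ)))
    (harc : ∀ s ∈ Ici (0:ℝ), ((γ₁' s) ^ 2 + (γ₂' s) ^ 2) / (γ₂ s) ^ 2 = 1)
    (hfin : IntegrableOn (fun t => γ₂ t / γ₁ t) (Ioi (0:ℝ)) volume) :
    BddAbove (γ₁ '' Ici (0:ℝ)) ∧
      ∀ s ∈ Ici (0:ℝ),
        γ₁ s ≤ γ₁ 0 * Real.exp (∫ t in Ioi (0:ℝ), γ₂ t / γ₁ t) := by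
  have key : ∀ s ∈ Ici (0:ℝ),
      γ₁ s ≤ γ₁ 0 * Real.exp (∫ t in Ioi (0:ℝ), γ₂ t / γ₁ t) := by
    intro s hs
    have hs0 : (0:ℝ) ≤ s := hs
    have hsub : uIcc 0 s ⊆ Ici (0:ℝ) := by
      rw [uIcc_of_le hs0]; exact Icc_subset_Ici_self
    have c1 : ContinuousOn γ₁ (Ici (0:ℝ)) := fun x hx =>
      (hd1 x hx).continuousAt.continuousWithinAt
    have c2 : ContinuousOn γ₂ (Ici (0:ℝ)) := fun x hx =>
      (hd2 x hx).continuousAt.continuousWithinAt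
    have cl : ContinuousOn (fun t => γ₁' t / γ₁ t) (Ici (0:ℝ)) :=
      hc1.div c1 (fun x hx => (hpos1 x hx).ne')
    have cr : ContinuousOn (fun t => γ₂ t / γ₁ t) (Ici (0:ℝ)) :=
      c2.div c1 (fun x hx => (hpos1 x hx).ne')
    have il := (cl.mono hsub).intervalIntegrable (μ := volume)
    have ir := (cr.mono hsub).intervalIntegrable (μ := volume)
    have hftc : ∫ t in (0:ℝ)..s, γ₁' t / γ₁ t = Real.log (γ₁ s) - Real.log (γ₁ 0) :=
      intervalIntegral.integral_eq_sub_of_hasDerivAt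
        (f := fun t => Real.log (γ₁ t))
        (fun x hx => (hd1 x (hsub hx)).log (hpos1 x (hsub hx)).ne') il
    have hle : ∫ t in (0:ℝ)..s, γ₁' t / γ₁ t ≤ ∫ t in (0:ℝ)..s, γ₂ t / γ₁ t := by
      apply intervalIntegral.integral_mono_on hs0 il ir
      intro x hx
      have hx0 : x ∈ Ici (0:ℝ) := hx.1
      have h2 := hpos2 x hx0
      have ha := harc x hx0
      rw [div_eq_one_iff_eq (by positivity)] at ha
      have h3 : γ₁' x ≤ γ₂ x := by
        exact le_of_abs_le (abs_le_of_sq_le_sq (by nlinarith [sq_nonneg (γ₂' x)]) h2.le)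
      exact div_le_div_of_nonneg_right h3 (hpos1 x hx0).le
    have hle2 : ∫ t in (0:ℝ)..s, γ₂ t / γ₁ t ≤ ∫ t in Ioi (0:ℝ), γ₂ t / γ₁ t := by
      rw [intervalIntegral.integral_of_le hs0]
      apply setIntegral_mono_set hfin
      · filter_upwards [ae_restrict_mem measurableSet_Ioi] with x hx
        have hx0 : x ∈ Ici (0:ℝ) := Ioi_subset_Ici_self hx
        exact (div_pos (hpos2 x hx0) (hpos1 x hx0)).le
      · exact Ioc_subset_Ioi_self.eventuallyLE
    have p0 := hpos1 0 self_mem_Ici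
    have ps := hpos1 s hs
    rw [← Real.exp_log ps]
    rw [← Real.exp_log p0]
    rw [← Real.exp_add]
    apply Real.exp_le_exp.2
    linarith
  refine ⟨⟨γ₁ 0 * Real.exp (∫ t in Ioi (0:ℝ), γ₂ t / γ₁ t), ?_⟩, key⟩
  rintro _ ⟨s, hs, rfl⟩
  exact key s hs
end

section
/- Let ρ > 0 and let w : [0,∞) → ℝ be a C^∞ function with w(x) > 0 for all x ≥ 0. Then there exists a C^∞ function W : [0,∞) → ℝ such that: W(x) = w(x − ρ) for all x ≥ ρ; W(0) = 0; W'(0) = 1; all even-order derivatives of W at 0 vanish (W^{(2k)}(0) = 0 for all k ≥ 1); and W(x) > 0 for all x > 0. -/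
open MeasureTheory Set

open scoped ContDiff Topology

/-- Borel's lemma on the real line. -/
lemma borel_real (a : ℕ → ℝ) :
    ∃ f : ℝ → ℝ, ContDiff ℝ ∞ f ∧ ∀ n, iteratedDeriv n f 0 = a n := by
  let χ : ContDiffBump (0:ℝ) := ⟨1, 2, by norm_num, by norm_num⟩
  let g : ℕ → ℝ → ℝ := fun n x => (a n / n.factorial) * x ^ n * χ x
  have hg : ∀ n, ContDiff ℝ ∞ (g n) := fun n =>
    (contDiff_const.mul (contDiff_id.pow n)).mul χ.contDiff
  have hgs : ∀ n, HasCompactSupport (g n) := fun n => χ.hasCompactSupport.mul_left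
  have hgb : ∀ n k, ∃ C, ∀ x, ‖iteratedFDeriv ℝ k (g n) x‖ ≤ C := fun n k =>
    ((hgs n).iteratedFDeriv k).exists_bound_of_continuous
      ((hg n).continuous_iteratedFDeriv (by exact_mod_cast le_top))
  choose C hC using hgb
  have hC0 : ∀ n k, 0 ≤ C n k := fun n k => (norm_nonneg _).trans (hC n k 0)
  let t : ℕ → ℝ := fun n => 1 + 2 ^ n * ∑ k ∈ Finset.range n, C n k
  have ht1 : ∀ n, 1 ≤ t n := fun n => by
    have : 0 ≤ ∑ k ∈ Finset.range n, C n k := Finset.sum_nonneg fun k _ => hC0 n k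
    have : 0 ≤ 2 ^ n * ∑ k ∈ Finset.range n, C n k := by positivity
    simp only [t]; linarith
  have ht0 : ∀ n, 0 < t n := fun n => one_pos.trans_le (ht1 n)
  have htC : ∀ n k, k < n → 2 ^ n * C n k ≤ t n := fun n k hk => by
    have h1 : C n k ≤ ∑ k ∈ Finset.range n, C n k :=
      Finset.single_le_sum (f := C n) (fun k _ => hC0 n k) (Finset.mem_range.2 hk)
    have h2 : 2 ^ n * C n k ≤ 2 ^ n * ∑ k ∈ Finset.range n, C n k := by gcongr
    simp only [t]; linarith
  let F : ℕ → ℝ → ℝ := fun n x => (t n ^ n)⁻¹ * g n (t n * x)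
  have hF : ∀ n, ContDiff ℝ ∞ (F n) := fun n =>
    contDiff_const.mul ((hg n).comp (contDiff_const.mul contDiff_id))
  have hFd : ∀ n k x, iteratedDeriv k (F n) x
      = (t n ^ n)⁻¹ * (t n ^ k * iteratedDeriv k (g n) (t n * x)) := fun n k x => by
    have h := congrFun (iteratedDeriv_comp_const_mul (n := k)
      ((hg n).of_le (by exact_mod_cast le_top)) (t n)) x
    simp only [F]
    rw [iteratedDeriv_const_mul_field, h]
  let v : ℕ → ℕ → ℝ := fun k n => (t n ^ n)⁻¹ * (t n ^ k * C n k)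
  have hFv : ∀ (k n : ℕ) (x : ℝ), ((k : ℕ∞) ≤ (⊤ : ℕ∞)) →
      ‖iteratedFDeriv ℝ k (F n) x‖ ≤ v k n := fun k n x _ => by
    have h := hC n k (t n * x)
    rw [norm_iteratedFDeriv_eq_norm_iteratedDeriv] at h ⊢
    have := ht0 n
    rw [hFd, norm_mul, norm_mul, Real.norm_of_nonneg (by positivity : 0 ≤ (t n ^ n)⁻¹),
      Real.norm_of_nonneg (by positivity : 0 ≤ t n ^ k)]
    simp only [v]
    gcongr
  have hv : ∀ k : ℕ, ((k : ℕ∞) ≤ (⊤ : ℕ∞)) → Summable (v k) := fun k _ => by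
    refine Summable.of_norm_bounded_eventually_nat summable_geometric_two ?_
    filter_upwards [Filter.eventually_gt_atTop k] with n hn
    have h0 := ht0 n
    have hc := hC0 n k
    simp only [v]
    rw [Real.norm_of_nonneg (by positivity)]
    have e : t n ^ k * t n ≤ t n ^ n := by
      rw [← pow_succ]; exact pow_le_pow_right₀ (ht1 n) hn
    rw [inv_mul_le_iff₀ (by positivity)]
    calc t n ^ k * C n k = t n ^ k * (2 ^ n * C n k) * (1/2)^n := by
            rw [one_div, inv_pow]; field_simp
      _ ≤ t n ^ k * t n * (1/2)^n := by gcongr; exact htC n k hn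
      _ ≤ _ := by gcongr
  refine ⟨fun x => ∑' n, F n x, contDiff_tsum hF hv hFv, fun k => ?_⟩
  have hF0 : ∀ n, iteratedDeriv k (F n) 0 = if n = k then a k else 0 := fun n => by
    have he : g n =ᶠ[𝓝 0] fun x => (a n / n.factorial) * x ^ n := by
      filter_upwards [χ.eventuallyEq_one] with x hx
      simp [g, hx]
    rw [hFd, mul_zero, he.iteratedDeriv_eq, iteratedDeriv_const_mul_field,
      iteratedDeriv_fun_pow_zero]
    have := (ht0 n).ne'
    by_cases h : n = k
    · subst h
      have := n.factorial_ne_zero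
      simp; field_simp
    · simp [h, Ne.symm h]
  rw [iteratedDeriv, iteratedFDeriv_tsum_apply hF hv hFv le_top]
  have hs : Summable fun n => iteratedFDeriv ℝ k (F n) 0 :=
    .of_norm_bounded (hv k le_top) fun n => hFv k n 0 le_top
  have := (ContinuousMultilinearMap.hasSum_eval hs.hasSum (fun _ => (1:ℝ))).tsum_eq
  rw [← this]
  change ∑' n, iteratedDeriv k (F n) 0 = a k
  simp_rw [hF0]
  simp

/-- Extension by zero of a function which is flat at the origin. -/
lemma flat_extend (n : ℕ) : ∀ g : ℝ → ℝ, ContDiffOn ℝ ∞ g (Ici (0:ℝ)) →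
    (∀ k, iteratedDerivWithin k g (Ici (0:ℝ)) 0 = 0) →
    ContDiff ℝ n (indicator (Ici (0:ℝ)) g) := by
  have key : ∀ g : ℝ → ℝ, ContDiffOn ℝ ∞ g (Ici (0:ℝ)) →
      (∀ k, iteratedDerivWithin k g (Ici (0:ℝ)) 0 = 0) →
      ∀ x, HasDerivAt (indicator (Ici (0:ℝ)) g)
        (indicator (Ici (0:ℝ)) (derivWithin g (Ici 0)) x) x := by
    intro g hg h0 x
    have hd := hg.differentiableOn (by simp)
    rcases lt_trichotomy x 0 with hx | hx | hx
    · rw [indicator_of_notMem (by simpa using hx)]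
      refine (hasDerivAt_const x (0:ℝ)).congr_of_eventuallyEq ?_
      filter_upwards [Iio_mem_nhds hx] with y hy
      exact indicator_of_notMem (by simpa using hy) _
    · subst hx
      have h00 : g 0 = 0 := by simpa using h0 0
      have h01 : derivWithin g (Ici 0) 0 = 0 := by
        have := h0 1
        rwa [iteratedDerivWithin_one] at this
      have e1 : HasDerivWithinAt (indicator (Ici (0:ℝ)) g) 0 (Ici 0) 0 := by
        have := (hd 0 (by simp)).hasDerivWithinAt
        rw [h01] at this
        exact this.congr (fun y hy => indicator_of_mem hy _) (by simp)
      have e2 : HasDerivWithinAt (indicator (Ici (0:ℝ)) g) 0 (Iic 0) 0 := by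
        refine (hasDerivWithinAt_const (0:ℝ) (Iic 0) (0:ℝ)).congr ?_ (by simp [h00])
        intro y hy
        rcases (mem_Iic.1 hy).eq_or_lt with rfl | hy
        · simp [h00]
        · exact indicator_of_notMem (by simpa using hy) _
      have := e1.union e2
      rw [Ici_union_Iic, hasDerivWithinAt_univ] at this
      simpa [h01] using this
    · rw [indicator_of_mem (by simpa using hx.le)]
      have := ((hd x hx.le).hasDerivWithinAt).hasDerivAt (Ici_mem_nhds hx)
      refine this.congr_of_eventuallyEq ?_
      filter_upwards [Ioi_mem_nhds hx] with y hy
      exact indicator_of_mem (by simpa using (mem_Ioi.1 hy).le) _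
  induction n with
  | zero =>
    intro g hg h0
    exact contDiff_zero.2 (continuous_iff_continuousAt.2 fun x => (key g hg h0 x).continuousAt)
  | succ n ih =>
    intro g hg h0
    push_cast
    rw [contDiff_succ_iff_deriv]
    refine ⟨fun x => (key g hg h0 x).differentiableAt, by simp, ?_⟩
    rw [show deriv (indicator (Ici (0:ℝ)) g) = indicator (Ici (0:ℝ)) (derivWithin g (Ici 0)) from
      funext fun x => (key g hg h0 x).deriv]
    refine ih _ ((contDiffOn_infty_iff_derivWithin (uniqueDiffOn_Ici 0)).1 hg).2 fun k => ?_
    rw [← iteratedDerivWithin_succ']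
    exact h0 _

/-- A smooth function on the closed half-line extends to the line. -/
lemma smooth_extend (w : ℝ → ℝ) (hw : ContDiffOn ℝ ∞ w (Ici (0:ℝ))) :
    ∃ f : ℝ → ℝ, ContDiff ℝ ∞ f ∧ ∀ x, 0 ≤ x → f x = w x := by
  obtain ⟨f, hf, hfd⟩ := borel_real fun n => iteratedDerivWithin n w (Ici (0:ℝ)) 0
  have h : ContDiff ℝ ∞ (indicator (Ici (0:ℝ)) (w - f)) := by
    refine contDiff_infty.2 fun n => flat_extend n _ (hw.sub hf.contDiffOn) fun k => ?_
    have hk : ((k : ℕ) : WithTop ℕ∞) ≤ ∞ := by exact_mod_cast le_top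
    rw [iteratedDerivWithin_sub (by simp) (uniqueDiffOn_Ici 0) ((hw 0 (by simp)).of_le hk)
      (hf.contDiffAt.contDiffWithinAt.of_le hk),
      iteratedDerivWithin_eq_iteratedDeriv (uniqueDiffOn_Ici 0) (hf.contDiffAt.of_le hk) (by simp),
      hfd, sub_self]
  refine ⟨_, hf.add h, fun x hx => ?_⟩
  simp [hx]

/-- Extension lemma: any smooth positive warping function `w` on `[0,∞)` extends,
after a shift by `ρ > 0`, to a smooth warping function `W` on `[0,∞)` with
`W(0) = 0`, `W'(0) = 1`, vanishing even derivatives at `0`, and `W > 0` on `(0,∞)`. -/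
theorem warping_function_extension
    (ρ : ℝ) (hρ : 0 < ρ) (w : ℝ → ℝ)
    (hw : ContDiffOn ℝ (⊤ : ℕ∞) w (Ici (0:ℝ)))
    (hwpos : ∀ x ∈ Ici (0:ℝ), 0 < w x) :
    ∃ W : ℝ → ℝ,
      ContDiffOn ℝ (⊤ : ℕ∞) W (Ici (0:ℝ)) ∧
      (∀ x, ρ ≤ x → W x = w (x - ρ)) ∧
      W 0 = 0 ∧
      iteratedDerivWithin 1 W (Ici (0:ℝ)) 0 = 1 ∧
      (∀ k : ℕ, 1 ≤ k → iteratedDerivWithin (2 * k) W (Ici (0:ℝ)) 0 = 0) ∧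
      (∀ x : ℝ, 0 < x → 0 < W x) := by
  obtain ⟨f, hf, hfw⟩ := smooth_extend w hw
  have hf0 : 0 < f 0 := by rw [hfw 0 le_rfl]; exact hwpos 0 (by simp)
  obtain ⟨ε, hε, hεf⟩ := Metric.eventually_nhds_iff.1
    (hf.continuous.continuousAt.eventually (lt_mem_nhds hf0))
  let δ := min ε (ρ / 2)
  have hδ : 0 < δ := lt_min hε (by linarith)
  have hδρ : δ ≤ ρ / 2 := min_le_right _ _
  have hfpos : ∀ x, -δ < x → 0 < f x := by
    intro x hx
    rcases le_or_gt 0 x with h | h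
    · rw [hfw x h]; exact hwpos x h
    · apply hεf
      rw [Real.dist_eq, sub_zero, abs_of_neg h]
      have : δ ≤ ε := min_le_left _ _
      linarith
  let φ : ℝ → ℝ := fun x => Real.smoothTransition ((x - (ρ - δ)) / δ)
  have hφ : ContDiff ℝ ∞ φ :=
    Real.smoothTransition.contDiff.comp ((contDiff_id.sub contDiff_const).div_const _)
  have hφ0 : ∀ x, x ≤ ρ - δ → φ x = 0 := fun x hx =>
    Real.smoothTransition.zero_of_nonpos
      (div_nonpos_of_nonpos_of_nonneg (by linarith) hδ.le)
  have hφ1 : ∀ x, ρ ≤ x → φ x = 1 := fun x hx =>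
    Real.smoothTransition.one_of_one_le ((one_le_div hδ).2 (by linarith))
  have hφn : ∀ x, 0 ≤ φ x := fun x => Real.smoothTransition.nonneg _
  have hφl : ∀ x, φ x ≤ 1 := fun x => Real.smoothTransition.le_one _
  let W : ℝ → ℝ := fun x => (1 - φ x) * x + φ x * f (x - ρ)
  have hW : ContDiff ℝ ∞ W :=
    ((contDiff_const.sub hφ).mul contDiff_id).add
      (hφ.mul (hf.comp (contDiff_id.sub contDiff_const)))
  have hW0 : W =ᶠ[𝓝 0] id := by
    filter_upwards [Iio_mem_nhds (show (0:ℝ) < ρ - δ by linarith)] with x hx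
    simp [W, hφ0 x (mem_Iio.1 hx).le]
  have hder : ∀ n : ℕ, iteratedDerivWithin n W (Ici (0:ℝ)) 0 = if n = 1 then 1 else 0 := by
    intro n
    rw [iteratedDerivWithin_eq_iteratedDeriv (uniqueDiffOn_Ici 0)
      (hW.contDiffAt.of_le (by exact_mod_cast le_top)) (by simp), hW0.iteratedDeriv_eq,
      iteratedDeriv_id]
    split_ifs <;> simp_all
  refine ⟨W, hW.contDiffOn, fun x hx => ?_, hW0.eq_of_nhds, by simp [hder], fun k hk => ?_,
    fun x hx => ?_⟩
  · simp [W, hφ1 x hx, hfw (x - ρ) (by linarith)]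
  · rw [hder, if_neg (by omega)]
  · rcases le_or_gt x (ρ - δ) with h | h
    · simpa [W, hφ0 x h] using hx
    · have hp := hfpos (x - ρ) (by linarith)
      have h1 := hφn x
      have h2 := hφl x
      simp only [W]
      rcases h1.eq_or_lt with h3 | h3
      · rw [← h3]; simpa using hx
      · have := mul_nonneg (sub_nonneg.2 h2) hx.le
        have := mul_pos h3 hp
        linarith
end

section
/- Let w : [0,∞) → ℝ be a continuous function with w(t) > 0 for all t > 0, and define the centroid function x_g(s) = (1/s)·∫₀^s w(t) dt for s > 0. Suppose there exist constants C > 0 and s₀ > 0 such that x_g(s) ≤ C·s for all s ≥ s₀. Then ∫_{s₀}^∞ t/(∫₀^t w(r) dr) dt = +∞. Consequently an end of revolution in ℍ³ whose warping function w = γ₁/γ₂ has centroid growing at most linearly is parabolic. -/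
open MeasureTheory Set

/-- If the centroid `x_g(s) = (1/s)∫₀^s w` of the warping function grows at most
linearly (`x_g(s) ≤ C·s` for `s ≥ s₀`), then `∫_{s₀}^∞ t/(∫₀^t w) dt = ∞`,
so the corresponding end of revolution in ℍ³ is parabolic. -/
theorem centroid_linear_growth_parabolic
    (w : ℝ → ℝ)
    (hw : ContinuousOn w (Ici (0:ℝ)))
    (hpos : ∀ t : ℝ, 0 < t → 0 < w t)
    (C s₀ : ℝ) (hC : 0 < C) (hs₀ : 0 < s₀)
    (hcent : ∀ s : ℝ, s₀ ≤ s → (1 / s) * ∫ t in (0:ℝ)..s, w t ≤ C * s) :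
    ∫⁻ t in Ioi s₀, ENNReal.ofReal (t / ∫ r in (0:ℝ)..t, w r) = ⊤ := by
  have hW : ∀ t : ℝ, s₀ < t → C⁻¹ * t⁻¹ ≤ t / ∫ r in (0:ℝ)..t, w r := by
    intro t ht
    have ht0 : 0 < t := hs₀.trans ht
    have hint : IntervalIntegrable w volume 0 t := by
      apply ContinuousOn.intervalIntegrable
      rw [uIcc_of_le ht0.le]
      exact hw.mono Icc_subset_Ici_self
    have hp : 0 < ∫ r in (0:ℝ)..t, w r :=
      intervalIntegral.intervalIntegral_pos_of_pos_on hint (fun x hx => hpos x hx.1) ht0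
    have h := hcent t ht.le
    rw [one_div, inv_mul_le_iff₀ ht0] at h
    rw [le_div_iff₀ hp, ← mul_inv, inv_mul_le_iff₀ (mul_pos hC ht0)]
    linarith
  by_contra hne
  apply not_integrableOn_Ioi_inv (a := s₀)
  have hlt : ∫⁻ t in Ioi s₀, ENNReal.ofReal (C⁻¹ * t⁻¹) < ⊤ :=
    lt_of_le_of_lt (setLIntegral_mono' measurableSet_Ioi
      (fun t ht => ENNReal.ofReal_le_ofReal (hW t ht))) (lt_top_iff_ne_top.mpr hne)
  have hI : IntegrableOn (fun t : ℝ => C⁻¹ * t⁻¹) (Ioi s₀) := by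
    refine ⟨by fun_prop, ?_⟩
    rw [hasFiniteIntegral_iff_ofReal]
    · exact hlt
    · filter_upwards [ae_restrict_mem measurableSet_Ioi] with t ht
      have ht0 : 0 < t := hs₀.trans ht
      simp only [Pi.zero_apply]
      positivity
  have h2 := hI.const_mul C
  simpa [IntegrableOn, ← mul_assoc, hC.ne'] using h2
end

section
/- Let w : [0,∞) → ℝ be a continuous function with w(t) > 0 for all t > 0, and suppose the limit L = lim_{s→∞} (1/s)·∫₀^s w(t) dt exists and is finite (the curve has confined centroid). Then ∫_1^∞ t/(∫₀^t w(r) dr) dt = +∞. Consequently an end of revolution in ℍ³ whose profile curve has confined centroid is parabolic. -/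
open MeasureTheory Set

/-- If the centroid `x_g(s) = (1/s)∫₀^s w` of the warping function has a finite
limit as `s → ∞` (confined centroid), then `∫_1^∞ t/(∫₀^t w) dt = ∞`,
so the corresponding end of revolution in ℍ³ is parabolic. -/
theorem confined_centroid_parabolic
    (w : ℝ → ℝ)
    (hw : ContinuousOn w (Ici (0:ℝ)))
    (hpos : ∀ t : ℝ, 0 < t → 0 < w t)
    (L : ℝ)
    (hlim : Filter.Tendsto (fun s : ℝ => (1 / s) * ∫ t in (0:ℝ)..s, w t)
      Filter.atTop (nhds L)) :
    ∫⁻ t in Ioi (1:ℝ), ENNReal.ofReal (t / ∫ r in (0:ℝ)..t, w r) = ⊤ := by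
  have hI : ∀ t : ℝ, 0 < t → 0 < ∫ r in (0:ℝ)..t, w r := by
    intro t ht
    apply intervalIntegral.intervalIntegral_pos_of_pos_on
    · apply ContinuousOn.intervalIntegrable
      rw [uIcc_of_le ht.le]
      exact hw.mono Icc_subset_Ici_self
    · intro x hx
      exact hpos x hx.1
    · exact ht
  have hev := hlim.eventually (gt_mem_nhds (lt_add_one L))
  obtain ⟨T, hT⟩ := Filter.eventually_atTop.1 hev
  have key : ∀ t ∈ Ioi (max T 1), 0 < L + 1 ∧ 1 / (L + 1) ≤ t / ∫ r in (0:ℝ)..t, w r := by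
    intro t ht
    have h1 : T < t := lt_of_le_of_lt (le_max_left _ _) ht
    have h2 : 1 < t := lt_of_le_of_lt (le_max_right _ _) ht
    have h0 : 0 < t := by linarith
    have hp := hI t h0
    have h3 := hT t h1.le
    have hL : 0 < L + 1 := lt_trans (by positivity) h3
    refine ⟨hL, ?_⟩
    rw [div_le_div_iff₀ hL hp]
    rw [one_div, inv_mul_lt_iff₀ h0] at h3
    linarith
  have hL : 0 < L + 1 := (key (max T 1 + 1) (by simp [mem_Ioi])).1
  rw [eq_top_iff]
  calc (⊤ : ENNReal) = ∫⁻ _ in Ioi (max T 1), ENNReal.ofReal (1 / (L + 1)) := by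
        rw [setLIntegral_const, Real.volume_Ioi, ENNReal.mul_top]
        exact (ENNReal.ofReal_pos.2 (by positivity)).ne'
    _ ≤ ∫⁻ t in Ioi (max T 1), ENNReal.ofReal (t / ∫ r in (0:ℝ)..t, w r) :=
        setLIntegral_mono' measurableSet_Ioi
          (fun t ht => ENNReal.ofReal_le_ofReal (key t ht).2)
    _ ≤ _ := lintegral_mono_set (Ioi_subset_Ioi (le_max_right _ _))
end

section
/- Fix a > 0 and define y_a : [0,∞) → ℝ by y_a(s) = a + ∫₀^s cosh(2a)·sinh(2t)/√(cosh²(2a)·cosh²(2t) − 1) dt. Then ∫₀^∞ 1/sinh(y_a(s)) ds < +∞. Consequently each end of the spherical catenoid in ℍ³, whose warping function is w₋₁(s) = sinh(y_a(s)), is non-parabolic. -/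
open MeasureTheory Set

lemma sc_pos (a : ℝ) (ha : 0 < a) (t : ℝ) :
    0 < Real.cosh (2 * a) ^ 2 * Real.cosh (2 * t) ^ 2 - 1 := by
  have h1 : 1 < Real.cosh (2 * a) := Real.one_lt_cosh.2 (by positivity)
  have h2 : 1 ≤ Real.cosh (2 * t) := Real.one_le_cosh _
  have h3 : 1 < Real.cosh (2 * a) ^ 2 := by nlinarith
  have h4 : 1 ≤ Real.cosh (2 * t) ^ 2 := by nlinarith
  nlinarith

lemma sc_integrand (a : ℝ) (ha : 0 < a) (t : ℝ) (ht : 0 ≤ t) :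
    1 - Real.exp (-2 * t) ≤ Real.cosh (2 * a) * Real.sinh (2 * t) /
          Real.sqrt (Real.cosh (2 * a) ^ 2 * Real.cosh (2 * t) ^ 2 - 1) := by
  have hp := sc_pos a ha t
  have h1 : 0 < Real.cosh (2 * a) := Real.cosh_pos _
  have h2 : 1 ≤ Real.cosh (2 * t) := Real.one_le_cosh _
  have hs : Real.sqrt (Real.cosh (2 * a) ^ 2 * Real.cosh (2 * t) ^ 2 - 1)
      ≤ Real.cosh (2 * a) * Real.cosh (2 * t) := by
    rw [Real.sqrt_le_left (by positivity)]
    nlinarith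
  rw [le_div_iff₀ (Real.sqrt_pos.2 hp)]
  have he : Real.exp (-2 * t) ≤ 1 := Real.exp_le_one_iff.2 (by linarith)
  have he0 := Real.exp_pos (-2 * t)
  have hsub : Real.cosh (2 * t) - Real.sinh (2 * t) = Real.exp (-2 * t) := by
    rw [Real.cosh_sub_sinh]; congr 1; ring
  calc _ ≤ (1 - Real.exp (-2 * t)) * (Real.cosh (2 * a) * Real.cosh (2 * t)) :=
        mul_le_mul_of_nonneg_left hs (by linarith)
    _ = Real.cosh (2 * a) * ((1 - Real.exp (-2 * t)) * Real.cosh (2 * t)) := by ring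
    _ ≤ _ := by
        apply mul_le_mul_of_nonneg_left _ h1.le
        nlinarith

lemma sc_y (a : ℝ) (ha : 0 < a) (s : ℝ) (hs : 0 ≤ s) :
    s - (1 - Real.exp (-2 * s)) / 2 ≤ ∫ t in (0:ℝ)..s,
        Real.cosh (2 * a) * Real.sinh (2 * t) /
          Real.sqrt (Real.cosh (2 * a) ^ 2 * Real.cosh (2 * t) ^ 2 - 1) := by
  have hc : Continuous fun t : ℝ => 1 - Real.exp (-2 * t) := by fun_prop
  have hc2 : Continuous fun t : ℝ => Real.cosh (2 * a) * Real.sinh (2 * t) /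
          Real.sqrt (Real.cosh (2 * a) ^ 2 * Real.cosh (2 * t) ^ 2 - 1) := by
    apply Continuous.div
    · fun_prop
    · fun_prop
    · intro t
      exact (Real.sqrt_pos.2 (sc_pos a ha t)).ne'
  have hint : ∫ t in (0:ℝ)..s, (1 - Real.exp (-2 * t)) = s - (1 - Real.exp (-2 * s)) / 2 := by
    rw [intervalIntegral.integral_eq_sub_of_hasDerivAt
      (f := fun t => t + Real.exp (-2 * t) / 2) _ (hc.intervalIntegrable _ _)]
    · simp; ring
    · intro t _
      have h := (hasDerivAt_id t).add
        ((((hasDerivAt_id t).const_mul (-2)).exp).div_const 2)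
      convert h using 1
      · rfl
      · simp; ring
  rw [← hint]
  exact intervalIntegral.integral_mono_on hs (hc.intervalIntegrable _ _)
    (hc2.intervalIntegrable _ _) (fun t ht => sc_integrand a ha t ht.1)

/-- The spherical catenoid in ℍ³: with
`y_a(s) = a + ∫₀^s cosh(2a)·sinh(2t)/√(cosh²(2a)cosh²(2t) − 1) dt`, one has
`∫₀^∞ 1/sinh(y_a(s)) ds < ∞`, hence each end of the spherical catenoid is
non-parabolic. -/
theorem spherical_catenoid_nonparabolic
    (a : ℝ) (ha : 0 < a) :
    ∫⁻ s in Ioi (0:ℝ),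
      ENNReal.ofReal (1 / Real.sinh (a + ∫ t in (0:ℝ)..s,
        Real.cosh (2 * a) * Real.sinh (2 * t) /
          Real.sqrt (Real.cosh (2 * a) ^ 2 * Real.cosh (2 * t) ^ 2 - 1))) < ⊤ := by
  obtain ⟨c, hc⟩ : ∃ c, c = (1 - Real.exp (-2 * a)) / 2 * Real.exp (a - 1 / 2) := ⟨_, rfl⟩
  have hq : 0 < 1 - Real.exp (-2 * a) := by
    have : Real.exp (-2 * a) < 1 := Real.exp_lt_one_iff.2 (by linarith)
    linarith
  have hc0 : 0 < c := by rw [hc]; positivity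
  have hI : IntegrableOn (fun s : ℝ => c⁻¹ * Real.exp (-s)) (Ioi 0) :=
    (integrableOn_exp_neg_Ioi 0).const_mul _
  refine lt_of_le_of_lt (setLIntegral_mono' measurableSet_Ioi ?_) hI.lintegral_lt_top
  intro s hs
  have hs' : (0:ℝ) < s := hs
  apply ENNReal.ofReal_le_ofReal
  have hy := sc_y a ha s hs'.le
  set Y := ∫ t in (0:ℝ)..s,
        Real.cosh (2 * a) * Real.sinh (2 * t) /
          Real.sqrt (Real.cosh (2 * a) ^ 2 * Real.cosh (2 * t) ^ 2 - 1)
  have h1 := Real.add_one_le_exp (-2 * s)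
  have h2 := Real.exp_pos (-2 * s)
  have hsinh : c * Real.exp s ≤ Real.sinh (a + Y) := by
    rw [Real.sinh_eq]
    have e1 : Real.exp (-(a + Y)) ≤ Real.exp (a + Y) * Real.exp (-2 * a) := by
      rw [← Real.exp_add]; apply Real.exp_le_exp.2; linarith
    have e2 : Real.exp (a - 1 / 2) * Real.exp s ≤ Real.exp (a + Y) := by
      rw [← Real.exp_add]; apply Real.exp_le_exp.2; linarith
    rw [hc]
    nlinarith [mul_le_mul_of_nonneg_left e2 hq.le]
  rw [Real.exp_neg, ← mul_inv, ← one_div]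
  exact one_div_le_one_div_of_le (by positivity) hsinh
end
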